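/- Let B ⊆ ℝ³ be a centrally symmetric convex body such that every closed convex subset of B is parkable in B. Then B has the dual Blaschke property: for every two-dimensional linear subspace H ⊆ ℝ³ there exists a nonzero vector u ∈ ℝ³ such that every point p ∈ H ∩ ∂B lies on a B-supporting line with direction u, i.e. p + t•u ∉ int B for all t ∈ ℝ. -/

import Mathlib

/-!
Let `f` be a nonzero functional vanishing on `H`. Parking the section `B ∩ {f = ε}` moves one of
its points, say `ε • u` with `f u = 1`, to the origin, so that `x - f x • u ∈ B` whenever `x ∈ B`
and `f x = ε`. Convexity extends this to all `x ∈ B` with `ε ≤ f x`. By compactness one vector `u`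
serves all `ε > 0` at once, and by symmetry the projection along `u` onto `ker f` then maps all of
`B` into `B`. Since a linear map preserving a convex neighbourhood of `0` also preserves its
interior, a line in direction `u` that meets `int B` meets `ker f ⊇ H` in a point of `int B`.
-/

open Set Topology

section Parkable

variable {G : Type*} [AddGroup G] {B C : Set G}

/-- `C` is parkable in `B`: some translate of `C` contains `0` and is contained in `B`. -/
def Parkable (C B : Set G) : Prop :=
  ∃ v, 0 ∈ (fun x => x + v) '' C ∧ (fun x => x + v) '' C ⊆ B

theorem parkable_iff_exists_sub_mem : Parkable C B ↔ ∃ c ∈ C, ∀ x ∈ C, x - c ∈ B := by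
  constructor
  · rintro ⟨v, ⟨c, hc, hcv⟩, hCB⟩
    obtain rfl : v = -c := (neg_eq_of_add_eq_zero_right hcv).symm
    exact ⟨c, hc, fun x hx => by simpa only [sub_eq_add_neg] using hCB (mem_image_of_mem _ hx)⟩
  · rintro ⟨c, hc, hCB⟩
    exact ⟨-c, ⟨c, hc, add_neg_cancel c⟩,
      image_subset_iff.2 fun x hx => by simpa only [mem_preimage, sub_eq_add_neg] using hCB x hx⟩

end Parkable

theorem neg_mem_of_eq_neg {G : Type*} [InvolutiveNeg G] {B : Set G} {x : G} (hsymm : B = -B)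
    (hx : x ∈ B) : -x ∈ B :=
  hsymm.ge (neg_mem_neg.2 hx)

variable {E : Type*} [AddCommGroup E] [Module ℝ E] [TopologicalSpace E] {B : Set E}
  {f : StrongDual ℝ E} {u : E} {ε : ℝ}

section ConvexNeighborhoods

variable [ContinuousSMul ℝ E]

open Pointwise in
theorem mapsTo_interior_of_convex {F : Type*} [AddCommGroup F] [Module ℝ F] [TopologicalSpace F]
    [IsTopologicalAddGroup F] [ContinuousSMul ℝ F] {C : Set F} (hB : B ∈ 𝓝 0)
    (hconv : Convex ℝ C) (hC : C ∈ 𝓝 0) {T : E →ₗ[ℝ] F} (hT : MapsTo T B C) :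
    MapsTo T (interior B) (interior C) := by
  intro q hq
  obtain ⟨r, hr0, hr1, y, hy, rfl⟩ :=
    exists_lt_of_gauge_lt (absorbent_nhds_zero hB) (interior_subset_gauge_lt_one B hq)
  have hTr : T (r • y) ∈ r • C := ⟨T y, hT hy, (map_smul T r y).symm⟩
  rw [← gauge_lt_one_iff_mem_interior hconv hC]
  exact (gauge_le_of_mem hr0.le hTr).trans_lt hr1

variable [IsTopologicalAddGroup E]

theorem mem_nhds_zero_of_convex_of_eq_neg (hconv : Convex ℝ B) (hint : (interior B).Nonempty)
    (hsymm : B = -B) : B ∈ 𝓝 0 := by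
  obtain ⟨x, hx⟩ := hint
  have hmid := hconv.combo_interior_self_mem_interior hx
    (neg_mem_of_eq_neg hsymm (interior_subset hx)) (a := 1 / 2) (b := 1 / 2)
    (by norm_num) (by norm_num) (by norm_num)
  rw [smul_neg, add_neg_cancel] at hmid
  exact mem_interior_iff_mem_nhds.1 hmid

theorem exists_mem_apply_pos (hB : B ∈ 𝓝 0) (hf : f ≠ 0) : ∃ e ∈ B, 0 < f e := by
  have himage : f '' B ∈ 𝓝 0 := by
    simpa only [map_zero] using (f.isOpenMap_of_ne_zero hf).image_mem_nhds hB
  obtain ⟨_, hpos, e, he, rfl⟩ := Filter.Eventually.exists_gt himage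
  exact ⟨e, he, hpos⟩

end ConvexNeighborhoods

section ProjectionDirections

/-- The normalised directions `u` for which the projection `x ↦ x - f x • u` along `u` onto `ker f`
maps the cap `B ∩ {ε ≤ f}` into `B`. -/
def projectionDirections (B : Set E) (f : StrongDual ℝ E) (ε : ℝ) : Set E :=
  {u | f u = 1 ∧ ∀ x ∈ B, ε ≤ f x → x - f x • u ∈ B}

theorem projectionDirections_mono (B : Set E) (f : StrongDual ℝ E) :
    Monotone (projectionDirections B f) :=
  fun _ _ hεε' _ hu => ⟨hu.1, fun x hx hx' => hu.2 x hx (hεε'.trans hx')⟩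

theorem sub_smul_mem_of_forall_mem_projectionDirections (hsymm : B = -B)
    (hu : ∀ ε > 0, u ∈ projectionDirections B f ε) {x : E} (hx : x ∈ B) : x - f x • u ∈ B := by
  have hpos {y : E} (hy : y ∈ B) (hfy : 0 < f y) : y - f y • u ∈ B := (hu _ hfy).2 y hy le_rfl
  rcases lt_trichotomy (f x) 0 with hneg | hzero | hfx
  · have hmem := hpos (neg_mem_of_eq_neg hsymm hx) (by simpa using hneg)
    convert neg_mem_of_eq_neg hsymm hmem using 1
    rw [map_neg]
    module
  · simpa [hzero] using hx
  · exact hpos hx hfx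

variable [ContinuousSMul ℝ E]

theorem sub_smul_mem_of_forall_apply_eq (hclosed : IsClosed B) (hconv : Convex ℝ B)
    (h0 : (0 : E) ∈ B) (hu : f u = 1) (hε : 0 < ε) (hlevel : ∀ x ∈ B, f x = ε → x - ε • u ∈ B)
    {x : E} (hx : x ∈ B) (hεx : ε ≤ f x) : x - f x • u ∈ B := by
  set w := x - f x • u with hw
  have hfw : f w = 0 := by simp [hw, hu]
  have hfx : 0 < f x := hε.trans_le hεx
  -- Averaging `s • w` with `x` up to level `ε` and then applying `hlevel` moves `s` closer to `1`,
  -- so the largest admissible `s` is `1`.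
  obtain ⟨s, ⟨⟨hs0, hs1⟩, hsB⟩, hsmax⟩ : ∃ s, IsGreatest {s ∈ Icc (0 : ℝ) 1 | s • w ∈ B} s :=
    (isCompact_Icc.inter_right (hclosed.preimage (by fun_prop : Continuous fun s : ℝ => s • w))
      ).exists_isGreatest ⟨0, left_mem_Icc.2 zero_le_one, by simpa using h0⟩
  set δ := ε / f x
  have hδ0 : 0 < δ := div_pos hε hfx
  have hδ1 : δ ≤ 1 := (div_le_one hfx).2 hεx
  have hδε : δ * f x = ε := div_mul_cancel₀ ε hfx.ne'
  have hstep : ((1 - δ) * s + δ) • w ∈ B := by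
    have hcombo : (1 - δ) • s • w + δ • x ∈ B :=
      hconv hsB hx (sub_nonneg.2 hδ1) hδ0.le (sub_add_cancel 1 δ)
    convert hlevel _ hcombo (by simp [hfw, hδε]) using 1
    rw [← hδε, hw]
    module
  have hle : (1 - δ) * s + δ ≤ s := hsmax ⟨⟨by nlinarith, by nlinarith⟩, hstep⟩
  have hs : s = 1 := hs1.antisymm (by nlinarith)
  simpa only [hs, one_smul] using hsB

theorem projectionDirections_nonempty_of_parkable (hclosed : IsClosed B) (hconv : Convex ℝ B)
    (h0 : (0 : E) ∈ B) (hε : 0 < ε) (hpark : Parkable (B ∩ f ⁻¹' {ε}) B) :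
    (projectionDirections B f ε).Nonempty := by
  obtain ⟨c, ⟨-, hfc : f c = ε⟩, hc⟩ := parkable_iff_exists_sub_mem.1 hpark
  have hfu : f (ε⁻¹ • c) = 1 := by simp [hfc, hε.ne']
  refine ⟨ε⁻¹ • c, hfu, fun x hx hεx =>
    sub_smul_mem_of_forall_apply_eq hclosed hconv h0 hfu hε (fun y hy hfy => ?_) hx hεx⟩
  rw [smul_inv_smul₀ hε.ne']
  exact hc y ⟨hy, hfy⟩

variable [IsTopologicalAddGroup E]

theorem isClosed_projectionDirections (hclosed : IsClosed B) (f : StrongDual ℝ E) (ε : ℝ) :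
    IsClosed (projectionDirections B f ε) := by
  simp only [projectionDirections, ofPred_and, ofPred_forall]
  exact (isClosed_eq f.continuous continuous_const).inter <| isClosed_biInter fun x _ =>
    isClosed_iInter fun _ => hclosed.preimage (f := fun u => x - f x • u) (by fun_prop)

theorem isCompact_projectionDirections [T2Space E] (hcomp : IsCompact B) {e : E} (he : e ∈ B)
    (hfe : 0 < f e) (hε : ε ≤ f e) : IsCompact (projectionDirections B f ε) := by
  have hcompact : IsCompact ((fun y => (f e)⁻¹ • (e - y)) '' B) := hcomp.image (by fun_prop)
  refine hcompact.of_isClosed_subset (isClosed_projectionDirections hcomp.isClosed f ε) ?_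
  intro u hu
  exact ⟨e - f e • u, hu.2 e he hε, by simp [inv_smul_smul₀ hfe.ne']⟩

theorem exists_forall_pos_mem_projectionDirections [T2Space E] (hcomp : IsCompact B)
    (hconv : Convex ℝ B) (hB : B ∈ 𝓝 0) (hf : f ≠ 0)
    (hpark : ∀ r, (B ∩ f ⁻¹' {r}).Nonempty → Parkable (B ∩ f ⁻¹' {r}) B) :
    ∃ u, ∀ ε > 0, u ∈ projectionDirections B f ε := by
  have h0 : (0 : E) ∈ B := mem_of_mem_nhds hB
  obtain ⟨e, he, hfe⟩ := exists_mem_apply_pos hB hf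
  have : Nonempty (Ioc 0 (f e)) := ⟨f e, right_mem_Ioc.2 hfe⟩
  have hnonempty (ε : Ioc 0 (f e)) : (projectionDirections B f ε).Nonempty := by
    obtain ⟨ε, hε0, hεe⟩ := ε
    refine projectionDirections_nonempty_of_parkable hcomp.isClosed hconv h0 hε0 (hpark ε ?_)
    refine ⟨(ε / f e) • e, hconv.smul_mem_of_zero_mem h0 he ⟨by positivity, ?_⟩, ?_⟩
    · exact (div_le_one hfe).2 hεe
    · simp [hfe.ne']
  obtain ⟨u, hu⟩ := IsCompact.nonempty_iInter_of_directed_nonempty_isCompact_isClosed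
    (fun ε : Ioc 0 (f e) => projectionDirections B f ε)
    ((projectionDirections_mono B f).comp (Subtype.mono_coe _)).directed_ge hnonempty
    (fun ε => isCompact_projectionDirections hcomp he hfe ε.2.2)
    (fun ε => isClosed_projectionDirections hcomp.isClosed f ε)
  refine ⟨u, fun ε hε => projectionDirections_mono B f (min_le_left ε (f e)) ?_⟩
  exact mem_iInter.1 hu ⟨min ε (f e), lt_min hε hfe, min_le_right ε (f e)⟩

end ProjectionDirections

section Supporting

variable [IsTopologicalAddGroup E] [ContinuousSMul ℝ E]

theorem add_smul_notMem_interior_of_forall_sub_smul_mem (hconv : Convex ℝ B) (hB : B ∈ 𝓝 0)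
    (hu : f u = 1) (hproj : ∀ x ∈ B, x - f x • u ∈ B) {p : E} (hfp : f p = 0)
    (hp : p ∉ interior B) (t : ℝ) : p + t • u ∉ interior B := by
  let T : E →ₗ[ℝ] E := LinearMap.id - (f : E →ₗ[ℝ] ℝ).smulRight u
  intro hpt
  have hTp : T (p + t • u) = p := by simp [T, hfp, hu]
  exact hp (hTp ▸ mapsTo_interior_of_convex hB hconv hB (T := T) hproj hpt)

theorem exists_strongDual_ne_zero_forall_mem_eq_zero [T2Space E] [FiniteDimensional ℝ E]
    {H : Submodule ℝ E} (hH : H ≠ ⊤) : ∃ f : StrongDual ℝ E, f ≠ 0 ∧ ∀ p ∈ H, f p = 0 := by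
  obtain ⟨f, hf, hHf⟩ := H.exists_le_ker_of_lt_top hH.lt_top
  exact ⟨f.toContinuousLinearMap, by simpa using hf, fun p hp => hHf hp⟩

theorem stmt_11_general [T2Space E] (hcomp : IsCompact B) (hconv : Convex ℝ B)
    (hint : (interior B).Nonempty) (hsymm : B = -B)
    (hpark : ∀ (f : StrongDual ℝ E) (r : ℝ), (B ∩ f ⁻¹' {r}).Nonempty →
      Parkable (B ∩ f ⁻¹' {r}) B)
    {H : Submodule ℝ E} (hH : H ≠ ⊤) :
    ∃ u : E, u ≠ 0 ∧ ∀ p ∈ (H : Set E) ∩ frontier B, ∀ t : ℝ, p + t • u ∉ interior B := by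
  have hB : B ∈ 𝓝 0 := mem_nhds_zero_of_convex_of_eq_neg hconv hint hsymm
  have : LocallyCompactSpace E := hcomp.locallyCompactSpace_of_mem_nhds_of_addGroup hB
  have : FiniteDimensional ℝ E := .of_locallyCompactSpace ℝ
  obtain ⟨f, hf, hHf⟩ := exists_strongDual_ne_zero_forall_mem_eq_zero hH
  obtain ⟨u, hu⟩ := exists_forall_pos_mem_projectionDirections hcomp hconv hB hf (hpark f)
  have hfu : f u = 1 := (hu 1 one_pos).1
  refine ⟨u, fun h => by simp [h] at hfu, fun p ⟨hpH, hp⟩ => ?_⟩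
  exact add_smul_notMem_interior_of_forall_sub_smul_mem hconv hB hfu
    (fun x => sub_smul_mem_of_forall_mem_projectionDirections hsymm hu) (hHf p hpH) hp.2

end Supporting

/-- A centrally symmetric convex body `B ⊆ ℝ³` all of whose closed convex
subsets are parkable in `B` has the dual Blaschke property. -/
theorem stmt_11 (B : Set (EuclideanSpace ℝ (Fin 3)))
    (hBcomp : IsCompact B) (hBconv : Convex ℝ B)
    (hBint : (interior B).Nonempty) (hB0 : (0 : EuclideanSpace ℝ (Fin 3)) ∈ B)
    (hBsym : B = -B)
    (hpark : ∀ C : Set (EuclideanSpace ℝ (Fin 3)),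
      C ⊆ B → C.Nonempty → IsClosed C → Convex ℝ C →
      ∃ v : EuclideanSpace ℝ (Fin 3),
        (0 : EuclideanSpace ℝ (Fin 3)) ∈ (fun x => x + v) '' C ∧
        (fun x => x + v) '' C ⊆ B) :
    ∀ H : Submodule ℝ (EuclideanSpace ℝ (Fin 3)), Module.finrank ℝ H = 2 →
      ∃ u : EuclideanSpace ℝ (Fin 3), u ≠ 0 ∧
        ∀ p ∈ (H : Set (EuclideanSpace ℝ (Fin 3))) ∩ frontier B,
          ∀ t : ℝ, p + t • u ∉ interior B := fun H hH =>
  stmt_11_general hBcomp hBconv hBint hBsym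
    (fun f r hne => hpark _ inter_subset_left hne
      (hBcomp.isClosed.inter (isClosed_singleton.preimage f.continuous))
      (hBconv.inter ((convex_singleton r).linear_preimage f.toLinearMap)))
    (by rintro rfl; simp at hH)
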